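/- For every integer n ≥ 1, the double star P_2(1,n) is determined by its spectrum if and only if n is odd or n = 2. -/

import Mathlib

/-!
The characteristic polynomial of `P₂(1,n)` is `x^(n-1) (x⁴ - (n+2) x² + n)`. All graphs that matter
are blow-ups of the path `P₄` plus isolated vertices. A blow-up with class sizes `p, q, r, s` has
characteristic polynomial `x^(N-4) (x⁴ - (pq + qr + rs) x² + pqrs)` (`IsBlowup.charPoly_eq`), and
`P₂(1,n)` is the blow-up with sizes `1, 1, 1, n`.

If `n = 2a` with `a ≥ 2`, the blow-up with sizes `1, a, 1, 2` and `a - 1` isolated vertices is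
cospectral to `P₂(1,n)` and not isomorphic to it (`not_isDS`).

Conversely, let `H` be cospectral to `P₂(1,n)`. Its nonzero eigenvalues are `±s, ±t` with
`0 < t < 1 < s`. Hence the adjacency matrix has rank `4`; `tr A³ = 0`, so there are no triangles;
and only one eigenvalue is `≥ 1`, so there is no induced `2K₂` (`no_two_edges`). These three
properties force `H` to be a blow-up of `P₄` plus isolated vertices (`exists_blowup`). Comparing
coefficients gives `pqrs = n` and `pq + qr + rs = n + 2`, and for `n` odd or `n = 2` the only
solutions are `(1,1,1,n)` and its reversal (`arith`). As `H` has `n + 3` vertices, no isolated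
vertices remain and `H` is the double star.
-/

open Polynomial SimpleGraph

/-- Characteristic polynomial (over ℝ) of the adjacency matrix of a finite simple graph:
`det (x•I - A(G))`. -/
noncomputable def charPoly {V : Type} [Fintype V] [DecidableEq V] (G : SimpleGraph V) :
    Polynomial ℝ :=
  letI := Classical.decRel G.Adj
  Matrix.charpoly (SimpleGraph.adjMatrix ℝ G)

/-- The double star `P₂(a,b)`: an edge whose two endpoints carry `a` and `b` pendant
leaves respectively.  `Sum.inl none` and `Sum.inr none` are the two centers. -/
def doubleStar (a b : ℕ) : SimpleGraph (Option (Fin a) ⊕ Option (Fin b)) :=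
  SimpleGraph.fromRel fun x y =>
    (x = Sum.inl none ∧ (y = Sum.inr none ∨ ∃ i, y = Sum.inl (some i))) ∨
    (x = Sum.inr none ∧ ∃ j, y = Sum.inr (some j))

/-- Two finite graphs are cospectral if their adjacency matrices have the same
characteristic polynomial. -/
def Cospectral {V W : Type} [Fintype V] [DecidableEq V] [Fintype W] [DecidableEq W]
    (G : SimpleGraph V) (H : SimpleGraph W) : Prop :=
  charPoly G = charPoly H

/-- A graph is determined by its spectrum (DS) if every finite graph cospectral to it is
isomorphic to it. -/
def IsDS {V : Type} [Fintype V] [DecidableEq V] (G : SimpleGraph V) : Prop :=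
  ∀ (W : Type) (_ : Fintype W) (_ : DecidableEq W) (H : SimpleGraph W),
    Cospectral G H → Nonempty (G ≃g H)

/-- The graph `A_a`: `K_{2,a}` together with two new pendant vertices, both attached to the
fixed vertex `Sum.inl (Sum.inl 0)` of the partite set of size 2. -/
def graphA (a : ℕ) : SimpleGraph ((Fin 2 ⊕ Fin a) ⊕ Fin 2) :=
  SimpleGraph.fromRel fun x y =>
    (∃ i j, x = Sum.inl (Sum.inl i) ∧ y = Sum.inl (Sum.inr j)) ∨
    (∃ k, x = Sum.inl (Sum.inl 0) ∧ y = Sum.inr k)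

/-- The graph `B_a`: `K_{4,a}` together with one new vertex adjacent to exactly two of the
vertices of the partite set of size 4. -/
def graphB (a : ℕ) : SimpleGraph ((Fin 4 ⊕ Fin a) ⊕ Unit) :=
  SimpleGraph.fromRel fun x y =>
    (∃ i j, x = Sum.inl (Sum.inl i) ∧ y = Sum.inl (Sum.inr j)) ∨
    (∃ i : Fin 4, i.val < 2 ∧ x = Sum.inl (Sum.inl i) ∧ y = Sum.inr ())

/-- The graph `R`: a 4-cycle `0-1-2-3-0` with pendant vertices `4` and `5` attached to the
adjacent cycle vertices `0` and `1` respectively. -/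
def graphR : SimpleGraph (Fin 6) :=
  SimpleGraph.fromRel fun x y =>
    (x = 0 ∧ y = 1) ∨ (x = 1 ∧ y = 2) ∨ (x = 2 ∧ y = 3) ∨ (x = 3 ∧ y = 0) ∨
    (x = 0 ∧ y = 4) ∨ (x = 1 ∧ y = 5)

/-! ### Blow-ups of a path on four vertices -/

/-- Adjacency in `P₄ + K₁`: the path `0 - 1 - 2 - 3` together with the isolated vertex `4`. -/
abbrev PathAdj (i j : Fin 5) : Prop :=
  (i.val + 1 = j.val ∨ j.val + 1 = i.val) ∧ i ≠ 4 ∧ j ≠ 4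

/-- `G` is a blow-up of `P₄ + K₁` along `c`: two vertices are adjacent exactly when their classes
are. Classes may be empty, and class `4` consists of isolated vertices of `G`. -/
def IsBlowup {V : Type} (G : SimpleGraph V) (c : V → Fin 5) : Prop :=
  ∀ x y, G.Adj x y ↔ PathAdj (c x) (c y)

/-- The number of vertices in class `i`. -/
def classSize {V : Type} [Fintype V] (c : V → Fin 5) (i : Fin 5) : ℕ :=
  Fintype.card {x // c x = i}

/-- The adjacency matrix of `P₄ + K₁`. -/
def pathMatrix : Matrix (Fin 5) (Fin 5) ℝ := Matrix.of fun i j => if PathAdj i j then 1 else 0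

lemma pathMatrix_charpoly (k : Fin 5 → ℝ) :
    (pathMatrix * Matrix.diagonal k).charpoly =
      X * (X ^ 4 - C (k 0 * k 1 + k 1 * k 2 + k 2 * k 3) * X ^ 2 + C (k 0 * k 1 * k 2 * k 3)) := by
  have h : pathMatrix * Matrix.diagonal k =
      !![0, k 1, 0, 0, 0; k 0, 0, k 2, 0, 0; 0, k 1, 0, k 3, 0; 0, 0, k 2, 0, 0; 0, 0, 0, 0, 0] := by
    ext i j
    rw [Matrix.mul_diagonal]
    fin_cases i <;> fin_cases j <;> simp [pathMatrix, PathAdj]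
  rw [h, Matrix.charpoly]
  simp [Matrix.charmatrix, Matrix.det_succ_row_zero, Fin.sum_univ_succ, Fin.succAbove]
  ring

/-- The adjacency matrix of a blow-up is `S B Sᵀ`, where `S` is the incidence matrix of vertices and
classes and `B` is `pathMatrix`. Up to powers of `X` its characteristic polynomial is that of the
`5 × 5` matrix `B Sᵀ S`, and `Sᵀ S` is the diagonal matrix of class sizes. -/
lemma IsBlowup.charPoly_eq {V : Type} [Fintype V] [DecidableEq V] {G : SimpleGraph V}
    {c : V → Fin 5} (h : IsBlowup G c) :
    X ^ 5 * charPoly G = X ^ Fintype.card V * (X * (X ^ 4 -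
      C ((classSize c 0 * classSize c 1 + classSize c 1 * classSize c 2 +
        classSize c 2 * classSize c 3 : ℕ) : ℝ) * X ^ 2 +
      C ((classSize c 0 * classSize c 1 * classSize c 2 * classSize c 3 : ℕ) : ℝ))) := by
  let S : Matrix V (Fin 5) ℝ := Matrix.of fun x i => if c x = i then 1 else 0
  have h1 : S.transpose * S = Matrix.diagonal fun i => (classSize c i : ℝ) := by
    ext i j
    rw [Matrix.mul_apply, Matrix.diagonal_apply]
    simp only [S, Matrix.transpose_apply, Matrix.of_apply, classSize, Fintype.card_subtype]
    split_ifs with hij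
    · subst hij
      simp [Finset.sum_ite, Finset.filter_filter]
    · apply Finset.sum_eq_zero
      intro x _
      split_ifs with h1 h2 <;> simp
      exact hij (h1.symm.trans h2)
  have h2 : charPoly G = (S * (pathMatrix * S.transpose)).charpoly := by
    unfold charPoly
    congr 1
    ext x y
    rw [Matrix.mul_apply, Finset.sum_eq_single (c x), Matrix.mul_apply,
      Finset.sum_eq_single (c y)]
    · simp [S, SimpleGraph.adjMatrix_apply, h x y, pathMatrix]
    · intro j _ hj
      simp [S, hj.symm]
    · simp
    · intro j _ hj
      simp [S, hj.symm]
    · simp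
  have h3 := Matrix.charpoly_mul_comm' S (pathMatrix * S.transpose)
  have h4 : pathMatrix * S.transpose * S =
      pathMatrix * Matrix.diagonal fun i => (classSize c i : ℝ) :=
    (Matrix.mul_assoc pathMatrix S.transpose S).trans (congrArg (pathMatrix * ·) h1)
  have h5 := (congrArg Matrix.charpoly h4).trans (pathMatrix_charpoly _)
  have h6 := h3.trans (congrArg (X ^ Fintype.card V * ·) h5)
  rw [h2]
  simp only [Nat.cast_add, Nat.cast_mul]
  simpa only [Fintype.card_fin] using h6

/-- A blow-up is determined up to isomorphism by its class sizes. -/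
lemma IsBlowup.iso {V W : Type} [Fintype V] [Fintype W] {G : SimpleGraph V} {H : SimpleGraph W}
    {c : V → Fin 5} {d : W → Fin 5} (hG : IsBlowup G c) (hH : IsBlowup H d)
    (h : ∀ i, classSize c i = classSize d i) : Nonempty (G ≃g H) := by
  classical
  have e : ∀ i, {x // c x = i} ≃ {y // d y = i} := fun i => Fintype.equivOfCardEq (h i)
  exact ⟨⟨Equiv.ofFiberEquiv e, by
    intro x y
    rw [hH, hG, Equiv.ofFiberEquiv_map e x, Equiv.ofFiberEquiv_map e y]⟩⟩

/-- Reversing the path reverses the list of class sizes. -/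
lemma IsBlowup.rev {V : Type} [Fintype V] {G : SimpleGraph V} {c : V → Fin 5}
    (hG : IsBlowup G c) : ∃ d : V → Fin 5, IsBlowup G d ∧ classSize d 0 = classSize c 3 ∧
      classSize d 1 = classSize c 2 ∧ classSize d 2 = classSize c 1 ∧
      classSize d 3 = classSize c 0 ∧ classSize d 4 = classSize c 4 := by
  let s : Equiv.Perm (Fin 5) := Equiv.swap 0 3 * Equiv.swap 1 2
  have key : ∀ i j, c i = s j ↔ s (c i) = j := by
    intro i j
    generalize c i = k
    revert k j; decide
  have hp : ∀ i j, PathAdj (s i) (s j) ↔ PathAdj i j := by decide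
  refine ⟨s ∘ c, fun x y => by rw [hG, Function.comp, Function.comp, hp], ?_⟩
  have : ∀ j, classSize (s ∘ c) j = classSize c (s j) := by
    intro j
    exact Fintype.card_congr (Equiv.subtypeEquivRight fun i => (key i j).symm)
  simp only [this]
  exact ⟨rfl, rfl, rfl, rfl, rfl⟩

lemma sum_classSize {V : Type} [Fintype V] (c : V → Fin 5) :
    classSize c 0 + classSize c 1 + classSize c 2 + classSize c 3 + classSize c 4 =
      Fintype.card V := by
  classical
  have := Fintype.card_congr (Equiv.sigmaFiberEquiv c)
  rw [Fintype.card_sigma, Fin.sum_univ_five] at this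
  exact this

/-! ### The double star and its cospectral mates -/

/-- The classes exhibiting `P₂(1,n)` as a blow-up of `P₄` with class sizes `1, 1, 1, n`. -/
def starClass (n : ℕ) : Option (Fin 1) ⊕ Option (Fin n) → Fin 5
  | Sum.inl (some _) => 0
  | Sum.inl none => 1
  | Sum.inr none => 2
  | Sum.inr (some _) => 3

lemma doubleStar_isBlowup (n : ℕ) : IsBlowup (doubleStar 1 n) (starClass n) := by
  rintro ((_ | x) | (_ | x)) ((_ | y) | (_ | y)) <;>
    simp [doubleStar, starClass, PathAdj, eq_iff_true_of_subsingleton]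

lemma starClass_size (n : ℕ) : classSize (starClass n) 0 = 1 ∧ classSize (starClass n) 1 = 1 ∧
    classSize (starClass n) 2 = 1 ∧ classSize (starClass n) 3 = n ∧
    classSize (starClass n) 4 = 0 := by
  classical
  have key : ∀ i, classSize (starClass n) i = (if i = 1 then 1 else 0) + (if i = 0 then 1 else 0) +
      ((if i = 2 then 1 else 0) + (if i = 3 then n else 0)) := by
    intro i
    rw [classSize, Fintype.card_subtype, Finset.card_filter]
    simp only [Fintype.sum_sum_type, Fintype.sum_option, starClass]
    simp [eq_comm]
  simp [key]

lemma doubleStar_charPoly (n : ℕ) (hn : 1 ≤ n) : charPoly (doubleStar 1 n) =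
    X ^ (n - 1) * (X ^ 4 - C ((n + 2 : ℕ) : ℝ) * X ^ 2 + C (n : ℝ)) := by
  have h := (doubleStar_isBlowup n).charPoly_eq
  obtain ⟨h0, h1, h2, h3, h4⟩ := starClass_size n
  have hc : Fintype.card (Option (Fin 1) ⊕ Option (Fin n)) = 4 + (n - 1) := by
    simp; omega
  rw [h0, h1, h2, h3, hc] at h
  apply mul_left_cancel₀ (pow_ne_zero 5 (X_ne_zero (R := ℝ)))
  rw [h, pow_add]
  have : 1 * 1 + 1 * 1 + 1 * n = n + 2 := by ring
  rw [this]
  simp only [one_mul]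
  ring

/-- For `n = 2a` with `a ≥ 2`, the blow-up with class sizes `1, a, 1, 2` together with `a - 1`
isolated vertices (that is, `graphA a` plus isolated vertices) is cospectral to `P₂(1,n)`. -/
lemma not_isDS (n : ℕ) (hn : 1 ≤ n) (h1 : ¬ Odd n) (h2 : n ≠ 2) : ¬ IsDS (doubleStar 1 n) := by
  intro hDS
  rw [Nat.not_odd_iff_even] at h1
  obtain ⟨a, ha⟩ := h1
  -- The size `a - 1` of the last class brings the number of vertices to `n + 3`.
  let k : Fin 5 → ℕ := ![1, a, 1, 2, a - 1]
  let G : SimpleGraph (Σ i, Fin (k i)) := SimpleGraph.fromRel fun x y => PathAdj x.1 y.1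
  have hG : IsBlowup G Sigma.fst := by
    intro x y
    simp only [G, SimpleGraph.fromRel_adj]
    constructor
    · rintro ⟨_, h | h⟩
      · exact h
      · exact ⟨h.1.symm, h.2.2, h.2.1⟩
    · intro h
      refine ⟨?_, Or.inl h⟩
      rintro rfl
      have := h.1
      omega
  have hk : ∀ i, classSize (Sigma.fst : (Σ i, Fin (k i)) → Fin 5) i = k i := by
    intro i
    rw [classSize, Fintype.card_congr (Equiv.sigmaSubtype i), Fintype.card_fin]
  have hc : Fintype.card (Σ i, Fin (k i)) = 4 + (n - 1) := by
    rw [← sum_classSize Sigma.fst]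
    simp only [hk]
    simp [k]
    omega
  have hco : Cospectral (doubleStar 1 n) G := by
    have h := hG.charPoly_eq
    rw [hc] at h
    simp only [hk] at h
    unfold Cospectral
    rw [doubleStar_charPoly n hn]
    apply mul_left_cancel₀ (pow_ne_zero 5 (X_ne_zero (R := ℝ)))
    rw [h, pow_add]
    have e1 : k 0 * k 1 + k 1 * k 2 + k 2 * k 3 = n + 2 := by simp [k]; omega
    have e2 : k 0 * k 1 * k 2 * k 3 = n := by simp [k]; omega
    rw [e1, e2]
    ring
  obtain ⟨e⟩ := hDS _ _ _ G hco
  -- The mate has an isolated vertex, the double star has none.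
  let z : Σ i, Fin (k i) := ⟨4, ⟨0, show 0 < a - 1 by omega⟩⟩
  have hz : ∀ y, ¬ (doubleStar 1 n).Adj (e.symm z) y := by
    intro y hy
    rw [← e.map_adj_iff, hG] at hy
    simp [z, PathAdj] at hy
  generalize e.symm z = w at hz
  have hw : ∃ y, (doubleStar 1 n).Adj w y := by
    simp only [doubleStar_isBlowup n _ _]
    rcases w with (_ | x) | (_ | x)
    · exact ⟨Sum.inr none, by simp [starClass, PathAdj]⟩
    · exact ⟨Sum.inl none, by simp [starClass, PathAdj]⟩
    · exact ⟨Sum.inl none, by simp [starClass, PathAdj]⟩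
    · exact ⟨Sum.inr none, by simp [starClass, PathAdj]⟩
  exact hw.elim hz

/-! ### Spectral consequences of cospectrality with the double star -/

/-- The nonzero eigenvalues of `P₂(1,n)` are `±s, ±t` with `0 < t < 1 < s`; `s²` and `t²` are the
roots `(n + 2 ± √(n² + 4)) / 2` of `y² - (n + 2) y + n`. -/
lemma exists_roots (n : ℕ) (hn : 1 ≤ n) : ∃ s t : ℝ, 1 < s ∧ 0 < t ∧ t < 1 ∧
    (X ^ 4 - C ((n + 2 : ℕ) : ℝ) * X ^ 2 + C (n : ℝ) : ℝ[X]) =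
      (X - C s) * (X - C (-s)) * ((X - C t) * (X - C (-t))) := by
  have hn' : (1 : ℝ) ≤ n := by exact_mod_cast hn
  set D := √((n : ℝ) ^ 2 + 4) with hD
  have hD2 : D ^ 2 = (n : ℝ) ^ 2 + 4 := Real.sq_sqrt (by positivity)
  have hD0 : 0 ≤ D := Real.sqrt_nonneg _
  have hD1 : (n : ℝ) < D := by nlinarith
  have hD3 : D < n + 2 := by nlinarith
  have hs := Real.sq_sqrt (show 0 ≤ ((n : ℝ) + 2 + D) / 2 by linarith)
  have ht := Real.sq_sqrt (show 0 ≤ ((n : ℝ) + 2 - D) / 2 by linarith)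
  set s := √(((n : ℝ) + 2 + D) / 2)
  set t := √(((n : ℝ) + 2 - D) / 2) with htdef
  have hs0 : 0 ≤ s := Real.sqrt_nonneg _
  have ht0 : 0 < t := Real.sqrt_pos.2 (by linarith)
  refine ⟨s, t, by nlinarith, ht0, by nlinarith, ?_⟩
  have e1 : ((n + 2 : ℕ) : ℝ) = s ^ 2 + t ^ 2 := by rw [hs, ht]; push_cast; ring
  have e2 : (n : ℝ) = s ^ 2 * t ^ 2 := by rw [hs, ht]; nlinarith
  rw [e1, e2]
  simp only [map_add, map_mul, map_pow, map_neg]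
  ring

/-- Orthogonal diagonalization of a real symmetric matrix, with the eigenvalue data needed below. -/
lemma exists_diag {W : Type} [Fintype W] [DecidableEq W] (A : Matrix W W ℝ)
    (hA : A.IsHermitian) : ∃ (U : Matrix W W ℝ) (l : W → ℝ), U.transpose * U = 1 ∧
      U * U.transpose = 1 ∧ A = U * Matrix.diagonal l * U.transpose ∧
      A.charpoly.roots = Multiset.map l Finset.univ.val ∧
      A.rank = Fintype.card {i // l i ≠ 0} := by
  refine ⟨hA.eigenvectorUnitary, hA.eigenvalues, ?_, ?_, ?_, ?_, hA.rank_eq_card_non_zero_eigs⟩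
  · have := Unitary.coe_star_mul_self hA.eigenvectorUnitary
    simpa [Matrix.star_eq_conjTranspose, Matrix.conjTranspose_eq_transpose_of_trivial] using this
  · have := Unitary.coe_mul_star_self hA.eigenvectorUnitary
    simpa [Matrix.star_eq_conjTranspose, Matrix.conjTranspose_eq_transpose_of_trivial] using this
  · have := hA.spectral_theorem
    rw [Unitary.conjStarAlgAut_apply] at this
    simpa [Matrix.star_eq_conjTranspose, Matrix.conjTranspose_eq_transpose_of_trivial] using this
  · have := hA.roots_charpoly_eq_eigenvalues
    simpa using this

/-- For entrywise nonnegative `A`, the trace of `A³` is the sum of the nonnegative weights of closed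
walks of length three, so it vanishes only if each weight does. -/
lemma triangle_free_of_trace {W : Type} [Fintype W] (A : Matrix W W ℝ) (h0 : ∀ x y, 0 ≤ A x y)
    (h : (A * A * A).trace = 0) (x y z : W) : A x y * A y z * A z x = 0 := by
  simp only [Matrix.trace, Matrix.diag, Matrix.mul_apply, Finset.sum_mul] at h
  have p : ∀ a b c, 0 ≤ A a b * A b c * A c a := fun a b c =>
    mul_nonneg (mul_nonneg (h0 _ _) (h0 _ _)) (h0 _ _)
  rw [Finset.sum_eq_zero_iff_of_nonneg (fun a _ => Finset.sum_nonneg fun c _ =>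
    Finset.sum_nonneg fun b _ => p a b c)] at h
  have h1 := h x (Finset.mem_univ _)
  rw [Finset.sum_eq_zero_iff_of_nonneg (fun c _ => Finset.sum_nonneg fun b _ => p x b c)] at h1
  have h2 := h1 z (Finset.mem_univ _)
  rw [Finset.sum_eq_zero_iff_of_nonneg (fun b _ => p x b z)] at h2
  exact h2 y (Finset.mem_univ _)

/-- If a real symmetric matrix has at most one eigenvalue `≥ 1`, then `vᵀ A v ≥ vᵀ v` cannot hold on
a two-dimensional space: that space contains a nonzero vector orthogonal to the exceptional
eigenvector, on which the form is strictly smaller. -/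
lemma no_plane {W : Type} [Fintype W] [DecidableEq W] {A U : Matrix W W ℝ} {l : W → ℝ}
    (hU : U * U.transpose = 1) (hA : A = U * Matrix.diagonal l * U.transpose)
    (i₀ : W) (hl : ∀ i, i ≠ i₀ → l i < 1) (x y : W → ℝ)
    (h : ∀ α β : ℝ, (α • x + β • y) ⬝ᵥ (α • x + β • y) ≤
      (α • x + β • y) ⬝ᵥ A.mulVec (α • x + β • y)) :
    ∃ α β : ℝ, (α ≠ 0 ∨ β ≠ 0) ∧ α • x + β • y = 0 := by
  obtain ⟨α, β, hab, hv⟩ : ∃ α β : ℝ, (α ≠ 0 ∨ β ≠ 0) ∧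
      U.transpose.mulVec (α • x + β • y) i₀ = 0 := by
    by_cases hx : U.transpose.mulVec x i₀ = 0
    · exact ⟨1, 0, by simp, by simpa using hx⟩
    · refine ⟨U.transpose.mulVec y i₀, -U.transpose.mulVec x i₀, by simp [hx], ?_⟩
      simp only [Matrix.mulVec_add, Matrix.mulVec_smul, Pi.add_apply, Pi.smul_apply, smul_eq_mul]
      ring
  refine ⟨α, β, hab, ?_⟩
  have h' := h α β
  set v := α • x + β • y
  set w := U.transpose.mulVec v with hw
  have hvw : v = U.mulVec w := by rw [hw, Matrix.mulVec_mulVec, hU, Matrix.one_mulVec]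
  have e1 : v ⬝ᵥ v = ∑ i, w i * w i := by
    have : v ⬝ᵥ v = v ⬝ᵥ (U * U.transpose).mulVec v := by rw [hU, Matrix.one_mulVec]
    rw [this, ← Matrix.mulVec_mulVec, Matrix.dotProduct_mulVec, ← Matrix.mulVec_transpose]
    rfl
  have e2 : v ⬝ᵥ A.mulVec v = ∑ i, w i * (l i * w i) := by
    rw [hA, ← Matrix.mulVec_mulVec, ← Matrix.mulVec_mulVec, Matrix.dotProduct_mulVec,
      ← Matrix.mulVec_transpose, ← hw]
    simp [dotProduct, Matrix.mulVec_diagonal]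
  rw [e1, e2] at h'
  have hnn : ∀ i, 0 ≤ w i * w i - w i * (l i * w i) := by
    intro i
    by_cases hi : i = i₀
    · rw [hi, hv]; simp
    · have := hl i hi
      nlinarith [mul_self_nonneg (w i)]
  have hz : ∑ i, (w i * w i - w i * (l i * w i)) = 0 := by
    apply le_antisymm
    · rw [Finset.sum_sub_distrib]; linarith
    · exact Finset.sum_nonneg fun i _ => hnn i
  rw [Finset.sum_eq_zero_iff_of_nonneg fun i _ => hnn i] at hz
  have hw0 : w = 0 := by
    funext i
    by_cases hi : i = i₀
    · rw [hi, hv]; rfl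
    · have h1 := hl i hi
      have h2 := hz i (Finset.mem_univ _)
      have h3 : (1 - l i) * (w i * w i) = 0 := by linarith
      rcases mul_eq_zero.1 h3 with h4 | h4
      · linarith
      · exact mul_self_eq_zero.1 h4
  rw [hvw, hw0, Matrix.mulVec_zero]

/-- A symmetric matrix with the characteristic polynomial of `P₂(1,n)` has rank `4`, satisfies
`tr A³ = 0` (the spectrum is symmetric about `0`), and has at most one eigenvalue `≥ 1`. -/
lemma spectral_facts {W : Type} [Fintype W] [DecidableEq W] (A : Matrix W W ℝ)
    (hA : A.IsHermitian) (n : ℕ) (hn : 1 ≤ n)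
    (hp : A.charpoly = X ^ (n - 1) * (X ^ 4 - C ((n + 2 : ℕ) : ℝ) * X ^ 2 + C (n : ℝ))) :
    A.rank = 4 ∧ (A * A * A).trace = 0 ∧ ∃ (U : Matrix W W ℝ) (l : W → ℝ) (i₀ : W),
      U * U.transpose = 1 ∧ A = U * Matrix.diagonal l * U.transpose ∧ ∀ i, i ≠ i₀ → l i < 1 := by
  obtain ⟨s, t, hs, ht0, ht1, hst⟩ := exists_roots n hn
  obtain ⟨U, l, hU1, hU2, hAU, hroots, hrank⟩ := exists_diag A hA
  have hR : Multiset.map l Finset.univ.val =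
      Multiset.replicate (n - 1) 0 + ({s} + {-s} + ({t} + {-t})) := by
    rw [← hroots, hp, hst, roots_mul, roots_mul, roots_mul, roots_mul, roots_X_sub_C,
      roots_X_sub_C, roots_X_sub_C, roots_X_sub_C, roots_pow, roots_X, Multiset.nsmul_singleton]
    all_goals simp only [ne_eq, mul_eq_zero, X_sub_C_ne_zero, pow_eq_zero_iff', X_ne_zero,
      false_and, or_self, not_false_eq_true]
  classical
  have hcount : ∀ P : ℝ → Prop, ∀ _ : DecidablePred P, (Finset.univ.filter fun i => P (l i)).card =
      Multiset.countP P (Multiset.replicate (n - 1) 0 + ({s} + {-s} + ({t} + {-t}))) := by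
    intro P _
    rw [← hR, Multiset.countP_map]
    rfl
  refine ⟨?_, ?_, ?_⟩
  · have e := hcount (fun r => r ≠ 0) inferInstance
    rw [← Fintype.card_subtype] at e
    rw [hrank]
    refine Eq.trans ?_ (e.trans ?_)
    · convert rfl
    have : Multiset.countP (fun r : ℝ => r ≠ 0) (Multiset.replicate (n - 1) 0) = 0 := by
      rw [Multiset.countP_eq_zero]
      intro a ha
      simpa using Multiset.eq_of_mem_replicate ha
    have hs0 : s ≠ 0 := by linarith
    simp only [Multiset.countP_add, this, ← Multiset.cons_zero, Multiset.countP_cons,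
      Multiset.countP_zero]
    simp [hs0, ht0.ne']
  · have h3 : A * A * A = U * (Matrix.diagonal l * Matrix.diagonal l * Matrix.diagonal l) *
        U.transpose := by
      rw [hAU]
      simp only [Matrix.mul_assoc]
      rw [← Matrix.mul_assoc U.transpose U, hU1, Matrix.one_mul, ← Matrix.mul_assoc U.transpose U,
        hU1, Matrix.one_mul]
    rw [h3, Matrix.trace_mul_comm, ← Matrix.mul_assoc, hU1, Matrix.one_mul,
      Matrix.diagonal_mul_diagonal, Matrix.diagonal_mul_diagonal, Matrix.trace_diagonal]
    have : ∑ i, l i * l i * l i = (Multiset.map (fun r => r * r * r)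
        (Multiset.map l Finset.univ.val)).sum := by
      rw [Multiset.map_map]; rfl
    rw [this, hR]
    simp
  · have h1 : (Finset.univ.filter fun i => 1 ≤ l i).card = 1 := by
      refine (hcount (fun r => 1 ≤ r) (Classical.decPred _)).trans ?_
      have : Multiset.countP (fun r : ℝ => 1 ≤ r) (Multiset.replicate (n - 1) 0) = 0 := by
        rw [Multiset.countP_eq_zero]
        intro a ha
        rw [Multiset.eq_of_mem_replicate ha]
        norm_num
      simp only [Multiset.countP_add, this, ← Multiset.cons_zero, Multiset.countP_cons,
        Multiset.countP_zero]
      rw [if_pos hs.le, if_neg (by linarith), if_neg (by linarith), if_neg (by linarith)]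
    obtain ⟨i₀, hi₀⟩ := Finset.card_eq_one.1 h1
    refine ⟨U, l, i₀, hU2, hAU, fun i hi => ?_⟩
    by_contra hlt
    have : i ∈ Finset.univ.filter fun i => 1 ≤ l i := by simpa using hlt
    rw [hi₀] at this
    exact hi (by simpa using this)

lemma det_zero_of_rank {W : Type} [Fintype W] (A : Matrix W W ℝ) (h : A.rank = 4)
    (r c : Fin 5 → W) : (A.submatrix r c).det = 0 := by
  by_contra hd
  have h1 := Matrix.rank_of_isUnit _ ((Matrix.isUnit_iff_isUnit_det _).2 (isUnit_iff_ne_zero.2 hd))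
  have h2 := Matrix.rank_submatrix_le A r c
  rw [h1, h] at h2
  simp at h2

/-! ### Combinatorial structure of a cospectral graph -/

section Structure

variable {W : Type} {H : SimpleGraph W}

/-- Without triangles, induced `2K₂` and induced `P₄`, a graph with an edge `uv` is complete
bipartite up to isolated vertices: a blow-up in which only classes `1`, `2`, `4` are used. The
hypothesis `hP` excludes induced `P₄` in the presence of `tf`. -/
lemma exists_blowup_of_no_path
    (tf : ∀ x y z, H.Adj x y → H.Adj y z → ¬ H.Adj z x)
    (kf : ∀ a b c d, H.Adj a b → H.Adj c d → H.Adj a c ∨ H.Adj a d ∨ H.Adj b c ∨ H.Adj b d)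
    (hP : ∀ a b c d, H.Adj a b → H.Adj b c → H.Adj c d → H.Adj a d)
    {u v : W} (huv : H.Adj u v) : ∃ c : W → Fin 5, IsBlowup H c := by
  classical
  refine ⟨fun x => if H.Adj x v then 1 else if H.Adj x u then 2 else 4, fun x y => ?_⟩
  have isol : ∀ x y, ¬ H.Adj x v → ¬ H.Adj x u → ¬ H.Adj x y := by
    intro x y h1 h2 h
    rcases kf x y u v h huv with h3 | h3 | h3 | h3
    · exact h2 h3
    · exact h1 h3
    · exact h1 (hP x y u v h h3 huv)
    · exact h2 (hP x y v u h h3 huv.symm)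
  dsimp only
  by_cases h1 : H.Adj x v
  · by_cases h2 : H.Adj y v
    · simpa [h1, h2, PathAdj] using fun h => tf x y v h h2 h1.symm
    by_cases h3 : H.Adj y u
    · simpa [h1, h2, h3, PathAdj] using hP x v u y h1 huv.symm h3.symm
    · simpa [h1, h2, h3, PathAdj] using fun h : H.Adj x y => isol y x h2 h3 h.symm
  by_cases h2 : H.Adj x u
  · by_cases h3 : H.Adj y v
    · simpa [h1, h2, h3, PathAdj] using hP x u v y h2 huv h3.symm
    by_cases h4 : H.Adj y u
    · simpa [h1, h2, h3, h4, PathAdj] using fun h => tf x y u h h4 h2.symm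
    · simpa [h1, h2, h3, h4, PathAdj] using fun h : H.Adj x y => isol y x h3 h4 h.symm
  · simpa [h1, h2, PathAdj] using isol x y h1 h2

/-- A graph with an edge, without triangles and induced `2K₂`, and with adjacency matrix of rank at
most `4`, is a blow-up of `P₄ + K₁`. Given an induced path `a - b - c - d`, whose adjacency matrix
`M` is invertible, the rank condition gives `A x y = rₓᵀ M⁻¹ r_y`, where `rₓ` lists the adjacencies
of `x` to `a, b, c, d`; the remaining hypotheses leave only five possible vectors `rₓ`. -/
lemma exists_blowup [Fintype W] [DecidableRel H.Adj]
    (tf : ∀ x y z, H.Adj x y → H.Adj y z → ¬ H.Adj z x)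
    (kf : ∀ a b c d, H.Adj a b → H.Adj c d → H.Adj a c ∨ H.Adj a d ∨ H.Adj b c ∨ H.Adj b d)
    (hdet : ∀ r c : Fin 5 → W, ((H.adjMatrix ℝ).submatrix r c).det = 0)
    {u v : W} (huv : H.Adj u v) : ∃ c : W → Fin 5, IsBlowup H c := by
  by_cases hP : ∀ a b c d, H.Adj a b → H.Adj b c → H.Adj c d → H.Adj a d
  · exact exists_blowup_of_no_path tf kf hP huv
  push Not at hP
  obtain ⟨a, b, c, d, hab, hbc, hcd, had⟩ := hP
  have hac : ¬ H.Adj a c := fun h => tf a b c hab hbc h.symm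
  have hbd : ¬ H.Adj b d := fun h => tf b c d hbc hcd h.symm
  set A := H.adjMatrix ℝ with hAdef
  have hA : ∀ x y, A x y = if H.Adj x y then 1 else 0 := fun x y => by
    rw [hAdef, SimpleGraph.adjMatrix_apply]
  have key : ∀ x y, A x y = A x a * (A y b - A y d) + A x b * A y a + A x c * A y d +
      A x d * (A y c - A y a) := by
    intro x y
    have h := hdet ![a, b, c, d, x] ![a, b, c, d, y]
    have hM : A.submatrix ![a, b, c, d, x] ![a, b, c, d, y] =
        !![0, 1, 0, 0, A y a; 1, 0, 1, 0, A y b; 0, 1, 0, 1, A y c; 0, 0, 1, 0, A y d;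
          A x a, A x b, A x c, A x d, A x y] := by
      ext i j
      fin_cases i <;> fin_cases j <;>
        simp [hA, hab, hbc, hcd, had, hac, hbd, hab.symm, hbc.symm, hcd.symm,
          H.adj_comm d a, H.adj_comm c a, H.adj_comm d b, H.adj_comm y]
    rw [hM] at h
    simp [Matrix.det_succ_row_zero, Fin.sum_univ_succ, Fin.succAbove] at h
    linarith
  have cls : ∀ x, ∃ i : Fin 5, (H.Adj x a ↔ PathAdj i 0) ∧ (H.Adj x b ↔ PathAdj i 1) ∧
      (H.Adj x c ↔ PathAdj i 2) ∧ (H.Adj x d ↔ PathAdj i 3) := by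
    intro x
    have t1 : ¬ (H.Adj x a ∧ H.Adj x b) := fun h => tf x a b h.1 hab h.2.symm
    have t2 : ¬ (H.Adj x b ∧ H.Adj x c) := fun h => tf x b c h.1 hbc h.2.symm
    have t3 : ¬ (H.Adj x c ∧ H.Adj x d) := fun h => tf x c d h.1 hcd h.2.symm
    -- Otherwise `x` closes the path to an induced 5-cycle, which has rank 5.
    have t4 : ¬ (H.Adj x a ∧ H.Adj x d) := by
      rintro ⟨h1, h2⟩
      have h3 : ¬ H.Adj x b := fun h => t1 ⟨h1, h⟩
      have h4 : ¬ H.Adj x c := fun h => t3 ⟨h, h2⟩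
      have := key x x
      simp [hA, h1, h2, h3, h4] at this
      norm_num at this
    have t5 : H.Adj x a → H.Adj x c ∨ H.Adj x d := fun h => by
      have := kf x a c d h hcd
      tauto
    have t6 : H.Adj x d → H.Adj x a ∨ H.Adj x b := fun h => by
      have := kf x d a b h hab
      rw [H.adj_comm d a, H.adj_comm d b] at this
      tauto
    by_cases ha : H.Adj x a
    · refine ⟨1, ?_⟩
      have hc : H.Adj x c := (t5 ha).resolve_right fun h => t4 ⟨ha, h⟩
      have hb : ¬ H.Adj x b := fun h => t1 ⟨ha, h⟩
      have hd : ¬ H.Adj x d := fun h => t4 ⟨ha, h⟩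
      simp [ha, hb, hc, hd, PathAdj]
    by_cases hd : H.Adj x d
    · refine ⟨2, ?_⟩
      have hb : H.Adj x b := (t6 hd).resolve_left ha
      have hc : ¬ H.Adj x c := fun h => t3 ⟨h, hd⟩
      simp [ha, hb, hc, hd, PathAdj]
    by_cases hb : H.Adj x b
    · have hc : ¬ H.Adj x c := fun h => t2 ⟨hb, h⟩
      exact ⟨0, by simp [ha, hb, hc, hd, PathAdj]⟩
    by_cases hc : H.Adj x c
    · exact ⟨3, by simp [ha, hb, hc, hd, PathAdj]⟩
    · exact ⟨4, by simp [ha, hb, hc, hd, PathAdj]⟩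
  choose f hf using cls
  refine ⟨f, fun x y => ?_⟩
  have h := key x y
  simp only [hA, (hf x).1, (hf x).2.1, (hf x).2.2.1, (hf x).2.2.2, (hf y).1, (hf y).2.1,
    (hf y).2.2.1, (hf y).2.2.2] at h
  have h' : (if H.Adj x y then (1 : ℝ) else 0) = if PathAdj (f x) (f y) then 1 else 0 := by
    rw [h]
    generalize f x = i
    generalize f y = j
    fin_cases i <;> fin_cases j <;> simp [PathAdj]
  constructor
  · intro h1
    by_contra h2
    rw [if_pos h1, if_neg h2] at h'
    exact one_ne_zero h'
  · intro h2
    by_contra h1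
    rw [if_pos h2, if_neg h1] at h'
    exact zero_ne_one h'

end Structure

/-- A graph with at most one eigenvalue `≥ 1` has no induced `2K₂`: on the span of the indicator
vectors of two independent edges, the adjacency form agrees with the squared norm. -/
lemma no_two_edges {W : Type} [Fintype W] [DecidableEq W] {H : SimpleGraph W}
    [DecidableRel H.Adj] {U : Matrix W W ℝ} {l : W → ℝ} {i₀ : W}
    (hU : U * U.transpose = 1) (hA : H.adjMatrix ℝ = U * Matrix.diagonal l * U.transpose)
    (hl : ∀ i, i ≠ i₀ → l i < 1) (a b c d : W) (hab : H.Adj a b) (hcd : H.Adj c d) :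
    H.Adj a c ∨ H.Adj a d ∨ H.Adj b c ∨ H.Adj b d := by
  by_contra hcon
  push Not at hcon
  obtain ⟨hac, had, hbc, hbd⟩ := hcon
  have nac : a ≠ c := by rintro rfl; exact had hcd
  have nad : a ≠ d := by rintro rfl; exact hac hcd.symm
  have nbc : b ≠ c := by rintro rfl; exact hac hab
  have nbd : b ≠ d := by rintro rfl; exact had hab
  have nab := hab.ne
  have ncd := hcd.ne
  obtain ⟨α, β, h0, h⟩ := no_plane hU hA i₀ hl (Pi.single a 1 + Pi.single b 1)
    (Pi.single c 1 + Pi.single d 1) (by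
      intro α β
      apply le_of_eq
      simp [Matrix.mulVec_add, Matrix.mulVec_smul, SimpleGraph.adjMatrix_apply, hab, hcd, hac, had,
        hbc, hbd, hab.symm, hcd.symm, H.adj_comm c a, H.adj_comm d a, H.adj_comm c b,
        H.adj_comm d b, nac, nad, nbc, nbd, nab, ncd, nac.symm, nad.symm, nbc.symm, nbd.symm,
        nab.symm, ncd.symm])
  have ha := congrFun h a
  have hc := congrFun h c
  simp [nac, nad, nab, nac.symm, nbc.symm, ncd] at ha hc
  tauto

/-! ### Class sizes -/

/-- The case `p = 1` of `arith`. -/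
lemma arith_one {q r s : ℕ} (hq : 1 ≤ q) (hr : 1 ≤ r) (hs : 1 ≤ s)
    (h : q + q * r + r * s = q * r * s + 2) (hn : Odd (q * r * s) ∨ q * r * s = 2) :
    q = 1 ∧ r = 1 := by
  have odd2 : s = 2 → q * r = 1 := by
    rintro rfl
    rcases hn with hn | hn
    · exact absurd hn (by simp)
    · omega
  rcases hs.eq_or_lt with rfl | hs
  · constructor <;> nlinarith
  rcases hq.eq_or_lt with rfl | hq
  · constructor <;> nlinarith
  exfalso
  have hs2 : s = 2 := by
    rcases (show 2 ≤ q from hq).eq_or_lt with rfl | hq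
    · have : r * 2 = r * s := by nlinarith
      exact (Nat.eq_of_mul_eq_mul_left hr this).symm
    rcases hr.eq_or_lt with rfl | hr
    · have : (q - 1) * (s - 2) = 0 := by
        zify [hq.le, show 1 ≤ q by omega, show 2 ≤ s from hs]
        zify at h
        linarith
      rcases mul_eq_zero.1 this with h | h <;> omega
    · exfalso
      obtain ⟨q, rfl⟩ := Nat.exists_eq_add_of_le (show 3 ≤ q from hq)
      obtain ⟨r, rfl⟩ := Nat.exists_eq_add_of_le (show 2 ≤ r from hr)
      obtain ⟨s, rfl⟩ := Nat.exists_eq_add_of_le (show 2 ≤ s from hs)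
      ring_nf at h
      nlinarith [Nat.zero_le (q * r), Nat.zero_le (q * s), Nat.zero_le (r * s)]
  have := odd2 hs2
  have := Nat.eq_one_of_mul_eq_one_right this
  omega

/-- Positive class sizes matching the two nontrivial coefficients for `P₂(1,n)`. If `p, s ≥ 2` the
equation fails for size reasons; if `p = 1` its solutions are `(1,1,1,s)`, `(1,2,r,2)` and
`(1,q,1,2)`, and the condition on the product leaves only the first family. -/
lemma arith {p q r s : ℕ} (h0 : 1 ≤ p * q * r * s)
    (h : p * q + q * r + r * s = p * q * r * s + 2)
    (hn : Odd (p * q * r * s) ∨ p * q * r * s = 2) :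
    q = 1 ∧ r = 1 ∧ (p = 1 ∨ s = 1) := by
  have hp : 1 ≤ p := Nat.pos_of_ne_zero (by rintro rfl; simp at h0)
  have hq : 1 ≤ q := Nat.pos_of_ne_zero (by rintro rfl; simp at h0)
  have hr : 1 ≤ r := Nat.pos_of_ne_zero (by rintro rfl; simp at h0)
  have hs : 1 ≤ s := Nat.pos_of_ne_zero (by rintro rfl; simp at h0)
  rcases hp.eq_or_lt with rfl | hp
  · simp only [one_mul] at h hn
    have := arith_one hq hr hs h hn
    exact ⟨this.1, this.2, Or.inl rfl⟩
  rcases hs.eq_or_lt with rfl | hs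
  · have e : r * q * p = p * q * r * 1 := by ring
    have := arith_one hr hq hp.le (by rw [e, ← h]; ring) (by rw [e]; exact hn)
    exact ⟨this.2, this.1, Or.inr rfl⟩
  exfalso
  obtain ⟨P, hP⟩ := Nat.exists_eq_add_of_le (show 2 * q ≤ p * q from Nat.mul_le_mul_right q hp)
  obtain ⟨S, hS⟩ := Nat.exists_eq_add_of_le (show r * 2 ≤ r * s from Nat.mul_le_mul_left r hs)
  rw [mul_assoc (p * q), hP, hS] at h
  obtain ⟨q, rfl⟩ := Nat.exists_eq_add_of_le hq
  obtain ⟨r, rfl⟩ := Nat.exists_eq_add_of_le hr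
  ring_nf at h
  nlinarith [Nat.zero_le (q * r), Nat.zero_le (q * S), Nat.zero_le (r * P), Nat.zero_le (P * S)]

/-! ### The characterization -/

lemma isDS_of (n : ℕ) (hn : 1 ≤ n) (hodd : Odd n ∨ n = 2) : IsDS (doubleStar 1 n) := by
  intro W _ _ H hco
  let _ := Classical.decRel H.Adj
  have hp : (H.adjMatrix ℝ).charpoly = charPoly H := rfl
  have hcard : Fintype.card W = 4 + (n - 1) := by
    have h1 : (charPoly (doubleStar 1 n)).natDegree = _ := Matrix.charpoly_natDegree_eq_dim _
    have h2 : (charPoly H).natDegree = Fintype.card W := Matrix.charpoly_natDegree_eq_dim _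
    rw [← h2, ← hco, h1]
    simp; omega
  have hco' : charPoly H = _ := hco.symm.trans (doubleStar_charPoly n hn)
  obtain ⟨hrank, htr, U, l, i₀, hU, hA, hl⟩ :=
    spectral_facts (H.adjMatrix ℝ) (H.isSymm_adjMatrix (α := ℝ)) n hn (hp.trans hco')
  have tf : ∀ x y z, H.Adj x y → H.Adj y z → ¬ H.Adj z x := by
    intro x y z h1 h2 h3
    have := triangle_free_of_trace (H.adjMatrix ℝ) (fun x y => by
      rw [SimpleGraph.adjMatrix_apply]; split_ifs <;> norm_num) htr x y z
    simp [SimpleGraph.adjMatrix_apply, h1, h2, h3] at this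
  obtain ⟨u, v, huv⟩ : ∃ u v, H.Adj u v := by
    by_contra hne
    push Not at hne
    have : H.adjMatrix ℝ = 0 := by
      ext x y
      simp [SimpleGraph.adjMatrix_apply, hne]
    rw [this, Matrix.rank_zero] at hrank
    omega
  obtain ⟨c, hc⟩ := exists_blowup tf (no_two_edges hU hA hl) (det_zero_of_rank _ hrank) huv
  have hpoly := hc.charPoly_eq
  rw [hco', hcard] at hpoly
  set p := classSize c 0
  set q := classSize c 1
  set r := classSize c 2
  set s := classSize c 3
  have hpoly' : (X ^ 4 - C ((n + 2 : ℕ) : ℝ) * X ^ 2 + C (n : ℝ) : ℝ[X]) =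
      X ^ 4 - C ((p * q + q * r + r * s : ℕ) : ℝ) * X ^ 2 + C ((p * q * r * s : ℕ) : ℝ) := by
    apply mul_left_cancel₀ (pow_ne_zero (5 + (n - 1)) (X_ne_zero (R := ℝ)))
    rw [pow_add, mul_assoc, hpoly, pow_add]
    ring
  have e2 := congrArg (fun f => coeff f 2) hpoly'
  have e0 := congrArg (fun f => coeff f 0) hpoly'
  simp only [coeff_add, coeff_sub, coeff_C_mul, coeff_X_pow, coeff_C] at e2 e0
  norm_num at e2 e0
  have e2' : n + 2 = p * q + q * r + r * s := by
    have : (n : ℝ) + 2 = p * q + q * r + r * s := by linarith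
    exact_mod_cast this
  have e0' : n = p * q * r * s := by exact_mod_cast e0
  obtain ⟨hq, hr, hps⟩ := arith (by rw [← e0']; exact hn) (by rw [← e2', ← e0'])
    (by rw [← e0']; exact hodd)
  have hsum := sum_classSize c
  obtain ⟨k0, k1, k2, k3, k4⟩ := starClass_size n
  rcases hps with hp1 | hs1
  · have : s = n := by rw [e0', hq, hr, hp1]; ring
    refine (doubleStar_isBlowup n).iso hc ?_
    intro i
    fin_cases i <;> simp only [Fin.zero_eta, Fin.mk_one, Fin.reduceFinMk] <;> omega
  · have : p = n := by rw [e0', hq, hr, hs1]; ring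
    obtain ⟨d, hd, d0, d1, d2, d3, d4⟩ := hc.rev
    refine (doubleStar_isBlowup n).iso hd ?_
    intro i
    fin_cases i <;> simp only [Fin.zero_eta, Fin.mk_one, Fin.reduceFinMk] <;> omega

/-- for every `n ≥ 1`, the double star `P₂(1,n)` is determined by its
spectrum if and only if `n` is odd or `n = 2`. -/
theorem doubleStar_one_n_DS_iff (n : ℕ) (hn : 1 ≤ n) :
    IsDS (doubleStar 1 n) ↔ (Odd n ∨ n = 2) := by
  refine ⟨fun h => ?_, isDS_of n hn⟩
  by_contra hcon
  push Not at hcon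
  exact not_isDS n hn hcon.1 hcon.2 h
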